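/- arXiv:2303.06717 — 2 statements merged into one kernel-verified Lean document; each statement's English description precedes it below -/
import Mathlib

section
/- Let d ≥ 1, let C = C₁ × ⋯ × C_d ⊆ ℤ^d with C_i = [1,n_i]. A pair (A,B) of finite subsets of ℤ^d satisfies A + B = C with |proj_i(A)| = α_i for all i and |C| = |A|·|B| if and only if A = A₁ × A₂ × ⋯ × A_d and B = B₁ × ⋯ × B_d where each (A_i, B_i) is a valid tiling of C_i with |A_i| = α_i. Consequently |T((α₁,...,α_d), C)| = ∏_{i=1}^d |T(α_i, C_i)|. -/
open Finset Pointwise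

/-- Canonical 1-dimensional tilings of `[1,n]` with tile size `α`. -/
def CanT1 (α n : ℕ) : Set (Finset ℤ × Finset ℤ) :=
  {p | p.1 + p.2 = Finset.Icc 1 (n : ℤ) ∧ p.1.card = α ∧
    (Finset.Icc 1 (n : ℤ)).card = p.1.card * p.2.card ∧
    (0 : ℤ) ∈ p.2 ∧ ∀ b ∈ p.2, 0 ≤ b}

/-- Canonical `d`-dimensional tilings of `C = [1,n₁] × ⋯ × [1,n_d]` with coordinate
projection sizes `α i`. -/
def CanTd (d : ℕ) (nn α : Fin d → ℕ) :
    Set (Finset (Fin d → ℤ) × Finset (Fin d → ℤ)) :=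
  {p | p.1 + p.2 = Fintype.piFinset (fun i => Finset.Icc 1 (nn i : ℤ)) ∧
    (∀ i, (p.1.image (fun x => x i)).card = α i) ∧
    (Fintype.piFinset (fun i => Finset.Icc 1 (nn i : ℤ))).card = p.1.card * p.2.card ∧
    (0 : Fin d → ℤ) ∈ p.2 ∧ ∀ b ∈ p.2, ∀ i, 0 ≤ b i}

open Function in
/-- fibre -/
def fibI {d : ℕ} (i : Fin d) (X : Finset (Fin d → ℤ)) (y : Fin d → ℤ) : Finset ℤ :=
  (X.filter (fun a => update a i 0 = update y i 0)).image (fun a => a i)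

open Function in
theorem mem_fibI {d : ℕ} (i : Fin d) (X : Finset (Fin d → ℤ)) (y : Fin d → ℤ) (t : ℤ) :
    t ∈ fibI i X y ↔ update y i t ∈ X := by
  unfold fibI
  simp only [Finset.mem_image, Finset.mem_filter]
  constructor
  · rintro ⟨a, ⟨ha, h⟩, rfl⟩
    have : update y i (a i) = a := by
      have h2 := congrArg (fun z => update z i (a i)) h
      simp only [update_idem, update_eq_self] at h2
      exact h2.symm
    rwa [this]
  · intro h
    exact ⟨_, ⟨h, by simp⟩, by simp⟩

open Function in
/-- partial transform -/
noncomputable def hatI {d : ℕ} (i : Fin d) (X : Finset (Fin d → ℤ)) (z : ℂ) :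
    AddMonoidAlgebra ℂ (Fin d → ℤ) :=
  ∑ a ∈ X, AddMonoidAlgebra.single (update a i 0) (z ^ (a i))

open Function in
theorem hatI_coeff {d : ℕ} (i : Fin d) (X : Finset (Fin d → ℤ)) (z : ℂ) (y : Fin d → ℤ) :
    (hatI i X z).coeff (update y i 0) = ∑ t ∈ fibI i X y, z ^ t := by
  unfold hatI fibI
  rw [Finset.sum_image]
  · rw [AddMonoidAlgebra.coeff_sum, Finset.sum_apply', Finset.sum_filter]
    refine Finset.sum_congr rfl fun a _ => ?_
    rw [AddMonoidAlgebra.coeff_single, Finsupp.single_apply]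
  · intro a ha b hb hab
    simp only [Finset.coe_filter, Set.mem_setOf_eq] at ha hb
    have h := ha.2.trans hb.2.symm
    have h2 := congrArg (fun z => update z i (a i)) h
    simp only [update_idem, update_eq_self] at h2
    rw [h2]
    simp only at hab
    rw [hab, update_eq_self]

open Function in
theorem hatI_coeff_ne {d : ℕ} (i : Fin d) (X : Finset (Fin d → ℤ)) (z : ℂ) (y : Fin d → ℤ)
    (hy : y i ≠ 0) : (hatI i X z).coeff y = 0 := by
  unfold hatI
  rw [AddMonoidAlgebra.coeff_sum, Finset.sum_apply']
  refine Finset.sum_eq_zero fun a _ => ?_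
  rw [AddMonoidAlgebra.coeff_single, Finsupp.single_apply, if_neg]
  rintro rfl
  simp at hy

open Function in
theorem hatI_mul {d : ℕ} (i : Fin d) (A B : Finset (Fin d → ℤ)) (z : ℂ) (hz : z ≠ 0)
    (h : (A + B).card = A.card * B.card) :
    hatI i A z * hatI i B z = hatI i (A + B) z := by
  have hinj := Finset.card_add_iff.1 h
  unfold hatI
  rw [Finset.sum_mul_sum, ← Finset.sum_product', Finset.add_def, Finset.sum_image]
  · refine Finset.sum_congr rfl fun p _ => ?_
    rw [AddMonoidAlgebra.single_mul_single]
    congr 1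
    · ext j
      by_cases hj : j = i
      · subst hj; simp
      · simp [hj]
    · rw [Pi.add_apply, zpow_add₀ hz]
  · intro a ha b hb hab
    simp only [Finset.coe_product] at ha hb
    exact hinj ha hb hab

theorem geom_zero (n : ℕ) (z : ℂ) (hz : z ^ n = 1) (h1 : z ≠ 1) (hn : 0 < n) :
    ∑ t ∈ Finset.Icc 1 (n : ℤ), z ^ t = 0 := by
  have hz0 : z ≠ 0 := by rintro rfl; simp [hn.ne'] at hz
  have e : Finset.Icc 1 (n : ℤ) = (Finset.range n).image (fun k : ℕ => (k : ℤ) + 1) := by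
    ext t
    simp only [Finset.mem_Icc, Finset.mem_image, Finset.mem_range]
    constructor
    · rintro ⟨h, h'⟩
      exact ⟨(t - 1).toNat, by omega, by omega⟩
    · rintro ⟨k, hk, rfl⟩
      omega
  rw [e, Finset.sum_image (by intro a _ b _ h; simpa using h)]
  have : ∀ k : ℕ, z ^ ((k : ℤ) + 1) = z ^ k * z := fun k => by
    rw [zpow_add₀ hz0]; simp
  simp only [this]
  rw [← Finset.sum_mul, geom_sum_eq h1, hz]
  simp

theorem coeff_zero (c : ℤ → ℂ) (m M : ℤ) (S : Finset ℂ) (hS0 : ∀ z ∈ S, z ≠ 0)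
    (hS : ∀ z ∈ S, ∑ a ∈ Finset.Icc m M, c a * z ^ a = 0) (hc : M - m < S.card) :
    ∀ a ∈ Finset.Icc m M, c a = 0 := by
  intro a ha
  rw [Finset.mem_Icc] at ha
  set K := (M - m + 1).toNat with hK
  have e : Finset.Icc m M = (Finset.range K).image (fun k : ℕ => (k : ℤ) + m) := by
    ext t
    simp only [Finset.mem_Icc, Finset.mem_image, Finset.mem_range]
    constructor
    · rintro ⟨h, h'⟩
      exact ⟨(t - m).toNat, by omega, by omega⟩
    · rintro ⟨k, hk, rfl⟩
      omega
  let p : Polynomial ℂ := ∑ k ∈ Finset.range K, Polynomial.monomial k (c (k + m))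
  have hdeg : p.degree < S.card := by
    have h1 : p.degree < K := by
      refine (Polynomial.degree_sum_le _ _).trans_lt ?_
      rw [Finset.sup_lt_iff (WithBot.bot_lt_coe _)]
      intro k hk
      refine (Polynomial.degree_monomial_le _ _).trans_lt ?_
      exact_mod_cast Finset.mem_range.1 hk
    refine h1.trans_le ?_
    have : K ≤ S.card := by omega
    exact_mod_cast this
  have hp : p = 0 := by
    refine Polynomial.eq_zero_of_degree_lt_of_eval_finset_eq_zero S hdeg ?_
    intro z hz
    have h := hS z hz
    rw [e, Finset.sum_image (by intro a _ b _ h; simpa using h)] at h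
    simp only [zpow_add₀ (hS0 z hz), ← mul_assoc, zpow_natCast] at h
    rw [← Finset.sum_mul] at h
    have h' := (mul_eq_zero.1 h).resolve_right (zpow_ne_zero _ (hS0 z hz))
    simp only [p, Polynomial.eval_finset_sum, Polynomial.eval_monomial]
    exact h'
  have := congrArg (fun q => Polynomial.coeff q (a - m).toNat) hp
  simp only [p, Polynomial.finset_sum_coeff, Polynomial.coeff_monomial, Polynomial.coeff_zero] at this
  rw [Finset.sum_ite_eq' , if_pos (by rw [Finset.mem_range]; omega)] at this
  rw [← this]
  congr 1
  omega

theorem fin_ind (F : Finset ℤ) (m M : ℤ) (hF : F ⊆ Finset.Icc m M) (z : ℂ) :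
    ∑ a ∈ Finset.Icc m M, (if a ∈ F then (1 : ℂ) else 0) * z ^ a = ∑ t ∈ F, z ^ t := by
  simp only [ite_mul, one_mul, zero_mul]
  rw [← Finset.sum_filter]
  congr 1
  ext t
  simp only [Finset.mem_filter]
  exact ⟨fun h => h.2, fun h => ⟨hF h, h⟩⟩

theorem fin_card_le (F : Finset ℤ) (m M : ℤ) (hF : F ⊆ Finset.Icc m M) (hne : F.Nonempty)
    (S : Finset ℂ) (hS0 : ∀ z ∈ S, z ≠ 0) (hS : ∀ z ∈ S, ∑ t ∈ F, z ^ t = 0) :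
    (S.card : ℤ) ≤ M - m := by
  by_contra! h
  obtain ⟨a, ha⟩ := hne
  have := coeff_zero (fun a => if a ∈ F then 1 else 0) m M S hS0
    (fun z hz => by rw [fin_ind F m M hF, hS z hz]) h a (hF ha)
  simp [ha] at this

theorem fin_max_mem (F : Finset ℤ) (m M : ℤ) (hF : F ⊆ Finset.Icc m M) (hne : F.Nonempty)
    (S : Finset ℂ) (hS0 : ∀ z ∈ S, z ≠ 0) (hS : ∀ z ∈ S, ∑ t ∈ F, z ^ t = 0)
    (hc : (S.card : ℤ) = M - m) : M ∈ F := by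
  by_contra h
  have := fin_card_le F m (M - 1) (fun t ht => by
    have h1 := Finset.mem_Icc.1 (hF ht)
    have : t ≠ M := by rintro rfl; exact h ht
    rw [Finset.mem_Icc]; omega) hne S hS0 hS
  omega

theorem fin_eq (F G : Finset ℤ) (m M : ℤ) (hF : F ⊆ Finset.Icc m M) (hG : G ⊆ Finset.Icc m M)
    (hFn : F.Nonempty) (hGn : G.Nonempty)
    (S : Finset ℂ) (hS0 : ∀ z ∈ S, z ≠ 0) (hS : ∀ z ∈ S, ∑ t ∈ F, z ^ t = 0)
    (hS' : ∀ z ∈ S, ∑ t ∈ G, z ^ t = 0) (hc : (S.card : ℤ) = M - m) : F ⊆ G := by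
  have hMF := fin_max_mem F m M hF hFn S hS0 hS hc
  have hMG := fin_max_mem G m M hG hGn S hS0 hS' hc
  intro t ht
  by_cases htM : t = M
  · rwa [htM]
  have h1 := Finset.mem_Icc.1 (hF ht)
  have hmM : m ≤ M := by omega
  have := coeff_zero (fun a => (if a ∈ F then 1 else 0) - (if a ∈ G then 1 else 0)) m (M - 1)
    S hS0 (fun z hz => by
      have e : Finset.Icc m M = insert M (Finset.Icc m (M - 1)) := by
        ext s; simp only [Finset.mem_Icc, Finset.mem_insert]; omega
      have h := fin_ind F m M hF z
      have h' := fin_ind G m M hG z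
      rw [hS z hz] at h
      rw [hS' z hz] at h'
      have h2 := congrArg₂ (fun a b => a - b) h h'
      simp only [← Finset.sum_sub_distrib, ← sub_mul] at h2
      rw [e, Finset.sum_insert (by simp)] at h2
      simpa [hMF, hMG] using h2) (by omega) t (by rw [Finset.mem_Icc]; omega)
  by_contra hG
  simp [ht, hG] at this

open Function in
theorem hatI_box {d : ℕ} (i : Fin d) (nn : Fin d → ℕ) (hn : ∀ i, 0 < nn i) (z : ℂ)
    (hz : z ^ (nn i) = 1) (h1 : z ≠ 1) :
    hatI i (Fintype.piFinset (fun i => Finset.Icc 1 (nn i : ℤ))) z = 0 := by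
  ext y
  by_cases hy : y i = 0
  · have e : y = update y i 0 := by rw [← hy, update_eq_self]
    rw [e, hatI_coeff]
    by_cases hh : ∀ j, j ≠ i → y j ∈ Finset.Icc 1 (nn j : ℤ)
    · have : fibI i (Fintype.piFinset (fun i => Finset.Icc 1 (nn i : ℤ))) y
          = Finset.Icc 1 (nn i : ℤ) := by
        ext t
        rw [mem_fibI, Fintype.mem_piFinset]
        constructor
        · intro h; simpa using h i
        · intro h j
          by_cases hj : j = i
          · subst hj; simpa using h
          · rw [update_of_ne hj]; exact hh j hj
      rw [this, geom_zero _ _ hz h1 (hn i)]; rfl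
    · have : fibI i (Fintype.piFinset (fun i => Finset.Icc 1 (nn i : ℤ))) y = ∅ := by
        ext t
        rw [mem_fibI, Fintype.mem_piFinset]
        constructor
        · intro h
          exfalso
          apply hh
          intro j hj
          have := h j
          rwa [update_of_ne hj] at this
        · intro h; simp at h
      rw [this]; rfl
  · rw [hatI_coeff_ne _ _ _ _ hy]; rfl

theorem card_units (n : ℕ) (hn : 0 < n) :
    (((Polynomial.nthRootsFinset n (1 : ℂ)).erase 1).card : ℤ) = n - 1 := by
  rw [Finset.card_erase_of_mem (by rw [Polynomial.mem_nthRootsFinset hn]; simp)]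
  have := (Complex.isPrimitiveRoot_exp n hn.ne').card_nthRootsFinset
  rw [this]; omega

theorem exists_bounds (X : Finset ℤ) (h : X.Nonempty) :
    ∃ m M, m ∈ X ∧ M ∈ X ∧ X ⊆ Finset.Icc m M :=
  ⟨X.min' h, X.max' h, X.min'_mem h, X.max'_mem h, fun t ht =>
    Finset.mem_Icc.2 ⟨X.min'_le t ht, X.le_max' t ht⟩⟩

open Function in
theorem fib_sub {d : ℕ} (i : Fin d) (X : Finset (Fin d → ℤ)) (y : Fin d → ℤ) :
    fibI i X y ⊆ X.image (fun a => a i) := by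
  unfold fibI
  exact Finset.image_subset_image (Finset.filter_subset _ _)

open Function in
theorem fib_ne {d : ℕ} (i : Fin d) (X : Finset (Fin d → ℤ)) (y : Fin d → ℤ) (hy : y ∈ X) :
    y i ∈ fibI i X y := by
  rw [mem_fibI, update_eq_self]; exact hy

open Function in
theorem exch {d : ℕ} (nn : Fin d → ℕ) (hn : ∀ i, 0 < nn i) (A B : Finset (Fin d → ℤ))
    (hAB : A + B = Fintype.piFinset (fun i => Finset.Icc 1 (nn i : ℤ)))
    (hc : (A + B).card = A.card * B.card) (hA : A.Nonempty) (hB : B.Nonempty)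
    (i : Fin d) (x y : Fin d → ℤ) (hx : x ∈ A) (hy : y ∈ A) : update y i (x i) ∈ A := by
  classical
  obtain ⟨m, M, hm, hM, hI⟩ := exists_bounds (A.image (fun a => a i)) (hA.image _)
  obtain ⟨m', M', hm', hM', hI'⟩ := exists_bounds (B.image (fun a => a i)) (hB.image _)
  have hmem : ∀ s : ℤ, s ∈ A.image (fun a => a i) → ∀ t : ℤ, t ∈ B.image (fun a => a i) →
      1 ≤ s + t ∧ s + t ≤ nn i := by
    intro s hs t ht
    obtain ⟨a, ha, rfl⟩ := Finset.mem_image.1 hs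
    obtain ⟨b, hb, rfl⟩ := Finset.mem_image.1 ht
    have := Finset.add_mem_add ha hb
    rw [hAB, Fintype.mem_piFinset] at this
    simpa using this i
  have b1 := hmem m hm m' hm'
  have b2 := hmem M hM M' hM'
  set U := (Polynomial.nthRootsFinset (nn i) (1 : ℂ)).erase 1 with hU
  have hUc := card_units (nn i) (hn i)
  rw [← hU] at hUc
  have hUz : ∀ z ∈ U, z ^ (nn i) = 1 ∧ z ≠ 1 ∧ z ≠ 0 := by
    intro z hz
    rw [hU, Finset.mem_erase, Polynomial.mem_nthRootsFinset (hn i)] at hz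
    refine ⟨hz.2, hz.1, ?_⟩
    rintro rfl
    simp [(hn i).ne'] at hz
  set S := U.filter (fun z => hatI i A z = 0) with hS
  set T := U.filter (fun z => hatI i B z = 0) with hT
  have hST : U ⊆ S ∪ T := by
    intro z hz
    obtain ⟨h1, h2, h3⟩ := hUz z hz
    have := hatI_mul i A B z h3 hc
    rw [hAB, hatI_box i nn hn z h1 h2] at this
    rw [Finset.mem_union, hS, hT, Finset.mem_filter, Finset.mem_filter]
    rcases mul_eq_zero.1 this with h | h
    · exact Or.inl ⟨hz, h⟩
    · exact Or.inr ⟨hz, h⟩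
  have hle := (Finset.card_le_card hST).trans (Finset.card_union_le _ _)
  have hS0 : ∀ z ∈ S, z ≠ 0 := fun z hz => (hUz z (Finset.mem_filter.1 hz).1).2.2
  have hT0 : ∀ z ∈ T, z ≠ 0 := fun z hz => (hUz z (Finset.mem_filter.1 hz).1).2.2
  have hSv : ∀ y, ∀ z ∈ S, ∑ t ∈ fibI i A y, z ^ t = 0 := fun y z hz => by
    rw [← hatI_coeff, (Finset.mem_filter.1 hz).2]; rfl
  have hTv : ∀ y, ∀ z ∈ T, ∑ t ∈ fibI i B y, z ^ t = 0 := fun y z hz => by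
    rw [← hatI_coeff, (Finset.mem_filter.1 hz).2]; rfl
  obtain ⟨b, hb⟩ := hB
  have c1 := fin_card_le _ m M ((fib_sub i A x).trans hI) ⟨_, fib_ne i A x hx⟩ S hS0 (hSv x)
  have c2 := fin_card_le _ m' M' ((fib_sub i B b).trans hI') ⟨_, fib_ne i B b hb⟩ T hT0 (hTv b)
  have := fin_eq _ _ m M ((fib_sub i A x).trans hI) ((fib_sub i A y).trans hI)
    ⟨_, fib_ne i A x hx⟩ ⟨_, fib_ne i A y hy⟩ S hS0 (hSv x) (hSv y) (by omega)
  exact (mem_fibI _ _ _ _).1 (this (fib_ne i A x hx))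

open Function in
theorem rect {d : ℕ} (A : Finset (Fin d → ℤ)) (hA : A.Nonempty)
    (h : ∀ i, ∀ x ∈ A, ∀ y ∈ A, update y i (x i) ∈ A) :
    A = Fintype.piFinset (fun i => A.image (fun x => x i)) := by
  ext z
  rw [Fintype.mem_piFinset]
  constructor
  · intro hz i
    exact Finset.mem_image_of_mem (fun x : Fin d → ℤ => x i) hz
  · intro hz
    have key : ∀ s : Finset (Fin d), ∃ a ∈ A, ∀ i ∈ s, a i = z i := by
      intro s
      induction s using Finset.induction_on with
      | empty => obtain ⟨a, ha⟩ := hA; exact ⟨a, ha, by simp⟩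
      | insert i s hi ih =>
        obtain ⟨a, ha, hs⟩ := ih
        obtain ⟨x, hx, hxz⟩ := Finset.mem_image.1 (hz i)
        refine ⟨update a i (x i), h i x hx a ha, ?_⟩
        intro j hj
        by_cases hji : j = i
        · subst hji; simpa using hxz
        · rw [update_of_ne hji]
          exact hs j ((Finset.mem_insert.1 hj).resolve_left hji)
    obtain ⟨a, ha, hs⟩ := key Finset.univ
    have : a = z := funext fun i => hs i (Finset.mem_univ i)
    rwa [← this]

theorem pi_add {d : ℕ} (As Bs : Fin d → Finset ℤ) :
    Fintype.piFinset As + Fintype.piFinset Bs = Fintype.piFinset (fun i => As i + Bs i) := by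
  ext z
  simp only [Finset.mem_add, Fintype.mem_piFinset]
  constructor
  · rintro ⟨a, ha, b, hb, rfl⟩ i
    exact ⟨a i, ha i, b i, hb i, rfl⟩
  · intro h
    choose a ha b hb hab using h
    exact ⟨a, ha, b, hb, funext hab⟩

theorem pi_image {d : ℕ} (As : Fin d → Finset ℤ) (h : ∀ i, (As i).Nonempty) (i : Fin d) :
    (Fintype.piFinset As).image (fun x => x i) = As i := by
  ext t
  simp only [Finset.mem_image, Fintype.mem_piFinset]
  constructor
  · rintro ⟨a, ha, rfl⟩; exact ha i
  · intro ht
    choose f hf using h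
    refine ⟨Function.update f i t, fun j => ?_, by simp⟩
    by_cases hj : j = i
    · subst hj; simpa using ht
    · rw [Function.update_of_ne hj]; exact hf j

theorem part1_aux (d : ℕ) (nn : Fin d → ℕ) (hn : ∀ i, 0 < nn i)
    (α : Fin d → ℕ) (As Bs : Fin d → Finset ℤ)
    (hAB : Fintype.piFinset As + Fintype.piFinset Bs
      = Fintype.piFinset (fun i => Finset.Icc 1 (nn i : ℤ)))
    (hα : ∀ i, (As i).card = α i)
    (hc : (Fintype.piFinset As + Fintype.piFinset Bs).card
      = (Fintype.piFinset As).card * (Fintype.piFinset Bs).card)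
    (nA : ∀ i, (As i).Nonempty) (nB : ∀ i, (Bs i).Nonempty) :
    ∀ i, As i + Bs i = Finset.Icc 1 (nn i : ℤ) ∧ (As i).card = α i ∧
          (As i).card * (Bs i).card = nn i := by
  have hCi : ∀ i, (Finset.Icc 1 (nn i : ℤ)).Nonempty := fun i =>
    Finset.nonempty_Icc.2 (by exact_mod_cast hn i)
  have hadd : ∀ i, As i + Bs i = Finset.Icc 1 (nn i : ℤ) := by
    intro i
    have h := pi_add As Bs
    rw [hAB] at h
    rw [← pi_image (fun i => Finset.Icc 1 (nn i : ℤ)) hCi i, h, pi_image]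
    exact fun j => (nA j).add (nB j)
  have hle : ∀ i, nn i ≤ (As i).card * (Bs i).card := by
    intro i
    have := Finset.card_add_le (s := As i) (t := Bs i)
    rw [hadd i] at this
    simpa using this
  intro i
  refine ⟨hadd i, hα i, ?_⟩
  rw [hAB, Fintype.card_piFinset, Fintype.card_piFinset, Fintype.card_piFinset,
    ← Finset.prod_mul_distrib] at hc
  simp only [Int.card_Icc, add_sub_cancel_right, Int.toNat_natCast] at hc
  by_contra hne
  have hlt := lt_of_le_of_ne (hle i) (Ne.symm hne)
  exact absurd hc (Finset.prod_lt_prod (fun i _ => hn i) (fun i _ => hle i)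
    ⟨i, Finset.mem_univ i, hlt⟩).ne

theorem part1 (d : ℕ) (nn : Fin d → ℕ) (hn : ∀ i, 0 < nn i)
    (α : Fin d → ℕ) (A B : Finset (Fin d → ℤ)) :
      (A + B = Fintype.piFinset (fun i => Finset.Icc 1 (nn i : ℤ)) ∧
       (∀ i, (A.image (fun x => x i)).card = α i) ∧
       (Fintype.piFinset (fun i => Finset.Icc 1 (nn i : ℤ))).card = A.card * B.card) ↔
      (∃ As Bs : (i : Fin d) → Finset ℤ,
        (∀ i, As i + Bs i = Finset.Icc 1 (nn i : ℤ) ∧ (As i).card = α i ∧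
          (As i).card * (Bs i).card = nn i) ∧
        A = Fintype.piFinset As ∧ B = Fintype.piFinset Bs) := by
  have hCi : ∀ i, (Finset.Icc 1 (nn i : ℤ)).Nonempty := fun i =>
    Finset.nonempty_Icc.2 (by exact_mod_cast hn i)
  constructor
  · rintro ⟨hAB, hα, hc⟩
    have hne : (A + B).Nonempty := by
      rw [hAB]; exact Fintype.piFinset_nonempty.2 hCi
    obtain ⟨hA, hB⟩ := Finset.add_nonempty.1 hne
    rw [← hAB] at hc
    obtain ⟨As, hAs⟩ : ∃ As : Fin d → Finset ℤ, As = fun i => A.image (fun x => x i) := ⟨_, rfl⟩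
    obtain ⟨Bs, hBs⟩ : ∃ Bs : Fin d → Finset ℤ, Bs = fun i => B.image (fun x => x i) := ⟨_, rfl⟩
    have rA := rect A hA fun i x hx y hy => exch nn hn A B hAB hc hA hB i x y hx hy
    have rB := rect B hB fun i x hx y hy => exch nn hn B A (by rw [add_comm, hAB])
      (by rw [add_comm, hc, mul_comm]) hB hA i x y hx hy
    rw [← hAs] at rA
    rw [← hBs] at rB
    have hα' : ∀ i, (As i).card = α i := by rw [hAs]; exact hα
    have nA : ∀ i, (As i).Nonempty := by rw [hAs]; exact fun i => hA.image _
    have nB : ∀ i, (Bs i).Nonempty := by rw [hBs]; exact fun i => hB.image _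
    clear hAs hBs hα
    subst rA rB
    exact ⟨As, Bs, part1_aux d nn hn α As Bs hAB hα' hc nA nB, rfl, rfl⟩
  · rintro ⟨As, Bs, h, rfl, rfl⟩
    have hAn : ∀ i, (As i).Nonempty := fun i => by
      have := hCi i
      rw [← (h i).1] at this
      exact (Finset.add_nonempty.1 this).1
    refine ⟨?_, fun i => ?_, ?_⟩
    · rw [pi_add]
      simp only [fun i => (h i).1]
    · rw [pi_image As hAn]; exact (h i).2.1
    · simp only [Fintype.card_piFinset, ← Finset.prod_mul_distrib, fun i => (h i).2.2]
      simp

theorem part2 (d : ℕ) (nn : Fin d → ℕ) (hn : ∀ i, 0 < nn i) (α : Fin d → ℕ) :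
    Nat.card (CanTd d nn α) = ∏ i, Nat.card (CanT1 (α i) (nn i)) := by
  rw [← Nat.card_pi]
  symm
  have hAne : ∀ i, ∀ p ∈ CanT1 (α i) (nn i), p.1.Nonempty ∧ p.2.Nonempty := by
    intro i p hp
    have : (Finset.Icc 1 (nn i : ℤ)).Nonempty := Finset.nonempty_Icc.2 (by exact_mod_cast hn i)
    rw [← hp.1] at this
    exact Finset.add_nonempty.1 this
  let f : (∀ i, CanT1 (α i) (nn i)) → CanTd d nn α := fun g =>
    ⟨(Fintype.piFinset fun i => (g i).1.1, Fintype.piFinset fun i => (g i).1.2), by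
      have h := (part1 d nn hn α (Fintype.piFinset fun i => (g i).1.1)
        (Fintype.piFinset fun i => (g i).1.2)).2 ⟨_, _, fun i =>
          ⟨(g i).2.1, (g i).2.2.1, by have := (g i).2.2.2.1; simpa using this.symm⟩, rfl, rfl⟩
      refine ⟨h.1, h.2.1, h.2.2, ?_, ?_⟩
      · rw [Fintype.mem_piFinset]
        exact fun i => (g i).2.2.2.2.1
      · intro b hb i
        exact (g i).2.2.2.2.2 _ (Fintype.mem_piFinset.1 hb i)⟩
  refine Nat.card_eq_of_bijective f ⟨?_, ?_⟩
  · intro g g' h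
    have h0 := congrArg Subtype.val h
    have h1 := congrArg Prod.fst h0
    have h2 := congrArg Prod.snd h0
    simp only [f] at h1 h2
    funext i
    apply Subtype.ext
    apply Prod.ext
    · rw [← pi_image (fun i => (g i).1.1) (fun i => (hAne i _ (g i).2).1) i, h1,
        pi_image (fun i => (g' i).1.1) (fun i => (hAne i _ (g' i).2).1) i]
    · rw [← pi_image (fun i => (g i).1.2) (fun i => (hAne i _ (g i).2).2) i, h2,
        pi_image (fun i => (g' i).1.2) (fun i => (hAne i _ (g' i).2).2) i]
  · rintro ⟨⟨A, B⟩, h1, h2, h3, h4, h5⟩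
    obtain ⟨As, Bs, h, rfl, rfl⟩ := (part1 d nn hn α A B).1 ⟨h1, h2, h3⟩
    simp only at h4 h5
    have h0 : ∀ i, (0 : ℤ) ∈ Bs i := fun i => Fintype.mem_piFinset.1 h4 i
    refine ⟨fun i => ⟨(As i, Bs i), (h i).1, (h i).2.1, ?_, h0 i, ?_⟩, rfl⟩
    · simpa using (h i).2.2.symm
    · intro b hb
      have e := pi_image Bs (fun i => ⟨0, h0 i⟩) i
      simp only at hb
      rw [← e] at hb
      obtain ⟨x, hx, rfl⟩ := Finset.mem_image.1 hb
      exact h5 x hx i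

/-- A pair `(A,B)` tiles `C = C₁ × ⋯ × C_d` with projection sizes `α i` iff it is a
product of one-dimensional tilings; consequently the number of canonical tilings of `C`
is the product of the numbers of canonical tilings of the `C_i`. -/
theorem product_tilings (d : ℕ) (hd : 1 ≤ d) (nn : Fin d → ℕ) (hn : ∀ i, 0 < nn i)
    (α : Fin d → ℕ) :
    (∀ A B : Finset (Fin d → ℤ),
      (A + B = Fintype.piFinset (fun i => Finset.Icc 1 (nn i : ℤ)) ∧
       (∀ i, (A.image (fun x => x i)).card = α i) ∧
       (Fintype.piFinset (fun i => Finset.Icc 1 (nn i : ℤ))).card = A.card * B.card) ↔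
      (∃ As Bs : (i : Fin d) → Finset ℤ,
        (∀ i, As i + Bs i = Finset.Icc 1 (nn i : ℤ) ∧ (As i).card = α i ∧
          (As i).card * (Bs i).card = nn i) ∧
        A = Fintype.piFinset As ∧ B = Fintype.piFinset Bs)) ∧
    Nat.card (CanTd d nn α) = ∏ i, Nat.card (CanT1 (α i) (nn i)) := by
  exact ⟨fun A B => part1 d nn hn α A B, part2 d nn hn α⟩
end

section
/- Let (A,B) be any canonical tiling of [1,n] with |A| = α. Then for every α' ∈ ℤ⁺, the number of canonical tilings of the set A by tiles of size α' is at most the number of canonical tilings of the interval [1,α] by tiles of size α': |T(α', A)| ≤ |T(α', [1,α])|. -/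
open Finset Pointwise

/-- Canonical tilings of a finite set `C ⊆ ℤ` with tile size `α`. -/
def CanT (α : ℕ) (C : Finset ℤ) : Set (Finset ℤ × Finset ℤ) :=
  {p | p.1 + p.2 = C ∧ p.1.card = α ∧ C.card = p.1.card * p.2.card ∧
    (0 : ℤ) ∈ p.2 ∧ ∀ b ∈ p.2, 0 ≤ b}

structure Til (n : ℕ) (A B : Set ℕ) : Prop where
  zA : 0 ∈ A
  zB : 0 ∈ B
  lt : ∀ a ∈ A, ∀ b ∈ B, a + b < n
  ex : ∀ x < n, ∃ a ∈ A, ∃ b ∈ B, a + b = x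
  uq : ∀ a ∈ A, ∀ b ∈ B, ∀ a' ∈ A, ∀ b' ∈ B, a + b = a' + b' → a = a' ∧ b = b'

theorem Til.symm {n : ℕ} {A B : Set ℕ} (h : Til n A B) : Til n B A where
  zA := h.zB
  zB := h.zA
  lt := fun a ha b hb => by have := h.lt b hb a ha; omega
  ex := fun x hx => by
    obtain ⟨a, ha, b, hb, e⟩ := h.ex x hx
    exact ⟨b, hb, a, ha, by omega⟩
  uq := fun a ha b hb a' ha' b' hb' e => by
    have := h.uq b hb a ha b' hb' a' ha' (by omega)
    exact ⟨this.2, this.1⟩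

theorem Til.block {n : ℕ} {A B : Set ℕ} (h : Til n A B) {m : ℕ} (hm : m ∈ B) (m0 : 0 < m)
    (hmin : ∀ b ∈ B, b < m → b = 0) (k : ℕ) :
    (∀ j < m, k * m + j ∈ B → j = 0) ∧ ∀ j < m, (k * m + j ∈ A ↔ k * m ∈ A) := by
  have mn : m < n := by have := h.lt 0 h.zA m hm; omega
  have base : ∀ j < m, j ∈ A := by
    intro j hj
    obtain ⟨a, ha, b, hb, e⟩ := h.ex j (by omega)
    have : b = 0 := hmin b hb (by omega)
    have : a = j := by omega
    exact this ▸ ha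
  induction k using Nat.strong_induction_on with
  | _ k ih =>
  rcases Nat.eq_zero_or_pos k with rfl | kpos
  · refine ⟨fun j hj hb => hmin j (by simpa using hb) hj, fun j hj => ?_⟩
    simp [base j hj, h.zA]
  have hkm : m ≤ k * m := Nat.le_mul_of_pos_left m kpos
  by_cases hkn : k * m < n
  swap
  · refine ⟨fun j hj hb => ?_, fun j hj => ⟨fun ha => ?_, fun ha => ?_⟩⟩
    · have := h.lt 0 h.zA _ hb; omega
    · have := h.lt _ ha 0 h.zB; omega
    · have := h.lt _ ha 0 h.zB; omega
  obtain ⟨a, ha, b, hb, e⟩ := h.ex (k * m) hkn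
  by_cases b0 : b = 0
  · have hA : k * m ∈ A := by
      have : a = k * m := by omega
      exact this ▸ ha
    have hnB : ∀ j < m, k * m + j ∈ B → j = 0 := by
      intro j hj hB
      by_contra j0
      have := h.uq (m - j) (base _ (by omega)) _ hB _ hA m hm (by omega)
      omega
    refine ⟨hnB, fun j hj => ⟨fun _ => hA, fun _ => ?_⟩⟩
    have := h.lt _ hA m hm
    obtain ⟨c, hc, d, hd, e'⟩ := h.ex (k * m + j) (by omega)
    by_cases d0 : d = 0
    · have : c = k * m + j := by omega
      exact this ▸ hc
    exfalso
    have hdm := Nat.div_add_mod' d m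
    have hdl := Nat.mod_lt d m0
    by_cases hdk : d < k * m
    · have hq : d / m < k := by
        rw [Nat.div_lt_iff_lt_mul m0]; exact hdk
      have hr : d % m = 0 := (ih _ hq).1 (d % m) hdl (by rw [hdm]; exact hd)
      have hq0 : 0 < d / m := by
        rcases Nat.eq_zero_or_pos (d / m) with h0 | h0
        · rw [h0] at hdm; omega
        · exact h0
      have hsub : (k - d / m) * m = k * m - d / m * m := Nat.sub_mul _ _ _
      have h1 := (ih (k - d / m) (by omega)).2 j hj
      have h2 : (k - d / m) * m + j = c := by omega
      rw [h2] at h1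
      have h3 := h.uq _ (h1.1 hc) d hd _ hA 0 h.zB (by omega)
      omega
    · have h4 : k * m + (d - k * m) = d := by omega
      have h5 := hnB (d - k * m) (by omega) (by rw [h4]; exact hd)
      have h6 : d = k * m := by omega
      have h3 := h.uq 0 h.zA d hd _ hA 0 h.zB (by omega)
      omega
  · have haj : ∀ j < m, a + j ∈ A := by
      intro j hj
      by_cases a0 : a = 0
      · simpa [a0] using base j hj
      have hdm := Nat.div_add_mod' b m
      have hdl := Nat.mod_lt b m0
      have hq : b / m < k := by
        rw [Nat.div_lt_iff_lt_mul m0]; omega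
      have hr : b % m = 0 := (ih _ hq).1 (b % m) hdl (by rw [hdm]; exact hb)
      have hq0 : 0 < b / m := by
        rcases Nat.eq_zero_or_pos (b / m) with h0 | h0
        · rw [h0] at hdm; omega
        · exact h0
      have hsub : (k - b / m) * m = k * m - b / m * m := Nat.sub_mul _ _ _
      have h1 := (ih (k - b / m) (by omega)).2 j hj
      have h2 : (k - b / m) * m = a := by omega
      rw [h2] at h1
      exact h1.2 ha
    have hnA : ∀ j < m, k * m + j ∉ A := by
      intro j hj hA
      have := h.uq _ (haj j hj) b hb _ hA 0 h.zB (by omega)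
      omega
    refine ⟨fun j hj hB => ?_, fun j hj => ⟨fun hA => absurd hA (hnA j hj), fun hA => absurd hA ?_⟩⟩
    · have := h.uq _ (haj j hj) b hb _ h.zA _ hB (by omega)
      omega
    · simpa using hnA 0 m0

theorem Til.dvd {n : ℕ} {A B : Set ℕ} (h : Til n A B) {m : ℕ} (hm : m ∈ B) (m0 : 0 < m)
    (hmin : ∀ b ∈ B, b < m → b = 0) (b : ℕ) (hb : b ∈ B) : b / m * m = b := by
  have hdm := Nat.div_add_mod' b m
  have := (h.block hm m0 hmin (b / m)).1 (b % m) (Nat.mod_lt _ m0) (by rw [hdm]; exact hb)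
  omega

theorem Til.mem_iff {n : ℕ} {A B : Set ℕ} (h : Til n A B) {m : ℕ} (hm : m ∈ B) (m0 : 0 < m)
    (hmin : ∀ b ∈ B, b < m → b = 0) (a : ℕ) : a ∈ A ↔ a / m * m ∈ A := by
  have hdm := Nat.div_add_mod' a m
  have := (h.block hm m0 hmin (a / m)).2 (a % m) (Nat.mod_lt _ m0)
  rwa [hdm] at this

theorem Til.quot {n : ℕ} {A B : Set ℕ} (h : Til n A B) {m : ℕ} (hm : m ∈ B) (m0 : 0 < m)
    (hmin : ∀ b ∈ B, b < m → b = 0) :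
    Til ((n + m - 1) / m) {k | k * m ∈ A} {k | k * m ∈ B} where
  zA := by simpa using h.zA
  zB := by simpa using h.zB
  lt := fun a ha b hb => by
    have := h.lt _ ha _ hb
    rw [← Nat.add_mul] at this
    rw [Nat.lt_iff_add_one_le, Nat.le_div_iff_mul_le m0, Nat.add_mul]
    omega
  ex := fun x hx => by
    rw [Nat.lt_iff_add_one_le, Nat.le_div_iff_mul_le m0, Nat.add_mul] at hx
    obtain ⟨a, ha, b, hb, e⟩ := h.ex (x * m) (by omega)
    have hb' := h.dvd hm m0 hmin b hb
    have hsub : (x - b / m) * m = x * m - b / m * m := Nat.sub_mul _ _ _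
    have h2 : (x - b / m) * m = a := by omega
    refine ⟨x - b / m, ?_, b / m, ?_, ?_⟩
    · show (x - b / m) * m ∈ A
      rw [h2]; exact ha
    · show b / m * m ∈ B
      rw [hb']; exact hb
    · have : b / m ≤ x := by
        apply Nat.le_of_mul_le_mul_right _ m0
        omega
      omega
  uq := fun a ha b hb a' ha' b' hb' e => by
    have := h.uq _ ha _ hb _ ha' _ hb' (by rw [← Nat.add_mul, ← Nat.add_mul, e])
    exact ⟨Nat.eq_of_mul_eq_mul_right m0 this.1, Nat.eq_of_mul_eq_mul_right m0 this.2⟩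

theorem exists_min (B : Set ℕ) (hB : ∃ b ∈ B, b ≠ 0) :
    ∃ m ∈ B, 0 < m ∧ ∀ b ∈ B, b < m → b = 0 := by
  classical
  refine ⟨Nat.find hB, (Nat.find_spec hB).1, Nat.pos_of_ne_zero (Nat.find_spec hB).2, ?_⟩
  intro b hb hlt
  have := Nat.find_min hB hlt
  tauto

theorem Til.nocarry {n : ℕ} {A B : Set ℕ} (h : Til n A B) (h1 : 1 ∈ B) (a b : ℕ)
    (ha : a ∈ A) (hb : b ∈ A) (hab : a + b + 1 ∈ A) : False := by
  obtain ⟨m, hm, m0, hmin⟩ := exists_min A ⟨_, hab, by omega⟩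
  have h1A : m ≠ 1 := by
    rintro rfl
    have := h.uq 1 hm 0 h.zB 0 h.zA 1 h1 rfl
    omega
  have e1 := h.symm.dvd hm m0 hmin a ha
  have e2 := h.symm.dvd hm m0 hmin b hb
  have e3 := h.symm.dvd hm m0 hmin _ hab
  have d1 : m ∣ a := ⟨_, by rw [mul_comm]; exact e1.symm⟩
  have d2 : m ∣ b := ⟨_, by rw [mul_comm]; exact e2.symm⟩
  have d3 : m ∣ a + b + 1 := ⟨_, by rw [mul_comm]; exact e3.symm⟩
  exact h1A (Nat.dvd_one.1 ((Nat.dvd_add_right (dvd_add d1 d2)).1 d3))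

theorem Til.main (n : ℕ) : ∀ A B : Set ℕ, Til n A B → ∃ (f : ℕ → ℕ) (N : ℕ),
    Set.BijOn f A (Set.Iio N) ∧ ∀ a ∈ A, ∀ b ∈ A, a + b ∈ A → f (a + b) = f a + f b := by
  induction n using Nat.strong_induction_on with
  | _ n ih =>
  intro A B h
  have npos : 0 < n := by have := h.lt _ h.zA _ h.zB; omega
  have hlt : ∀ m, 2 ≤ m → m < n → (n + m - 1) / m < n := by
    intro m hm hmn
    rw [Nat.div_lt_iff_lt_mul (by omega)]
    nlinarith [Nat.sub_le (n + m) 1]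
  by_cases hB : ∃ b ∈ B, b ≠ 0
  swap
  · push Not at hB
    have : A = Set.Iio n := by
      ext x
      constructor
      · intro hx
        exact h.lt x hx 0 h.zB
      · intro hx
        obtain ⟨a, ha, b, hb, e⟩ := h.ex x hx
        have := hB b hb
        have : a = x := by omega
        exact this ▸ ha
    exact ⟨id, n, by rw [this]; exact Set.bijOn_id _, by simp⟩
  obtain ⟨m, hm, m0, hmin⟩ := exists_min B hB
  by_cases m1 : m = 1
  · subst m1
    by_cases hA : ∃ b ∈ A, b ≠ 0
    swap
    · push Not at hA
      have : A = Set.Iio 1 := by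
        ext x
        constructor
        · intro hx
          simp [hA x hx]
        · intro hx
          have : x = 0 := by simpa using hx
          exact this ▸ h.zA
      exact ⟨id, 1, by rw [this]; exact Set.bijOn_id _, by simp⟩
    obtain ⟨p, hp, p0, hpmin⟩ := exists_min A hA
    have hp1 : p ≠ 1 := by
      rintro rfl
      have := h.uq 1 hp 0 h.zB 0 h.zA 1 hm rfl
      omega
    have hpn := h.lt p hp 0 h.zB
    obtain ⟨f, N, hf, hadd⟩ := ih _ (hlt p (by omega) (by omega)) _ _ (h.symm.quot hp p0 hpmin).symm
    have hd := h.symm.dvd hp p0 hpmin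
    have hq : ∀ a ∈ A, a / p ∈ {k | k * p ∈ A} := by
      intro a ha
      show a / p * p ∈ A
      rw [hd a ha]; exact ha
    have hadd' : ∀ a ∈ A, ∀ b ∈ A, (a + b) / p = a / p + b / p := by
      intro a ha b hb
      apply Nat.add_div_of_dvd_right
      exact ⟨_, by rw [mul_comm]; exact (hd a ha).symm⟩
    refine ⟨fun x => f (x / p), N, ⟨?_, ?_, ?_⟩, ?_⟩
    · intro a ha
      exact hf.mapsTo (hq a ha)
    · intro a ha b hb e
      have := hf.injOn (hq a ha) (hq b hb) e
      rw [← hd a ha, ← hd b hb, this]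
    · intro y hy
      obtain ⟨x, hx, e⟩ := hf.surjOn hy
      refine ⟨x * p, hx, ?_⟩
      simp [Nat.mul_div_cancel _ p0, e]
    · intro a ha b hb hab
      have e := hadd' a ha b hb
      show f ((a + b) / p) = f (a / p) + f (b / p)
      rw [e]
      apply hadd _ (hq a ha) _ (hq b hb)
      rw [← e]; exact hq _ hab
  · have hmn := h.lt 0 h.zA m hm
    have hQ := h.quot hm m0 hmin
    obtain ⟨f, N, hf, hadd⟩ := ih _ (hlt m (by omega) (by omega)) _ _ hQ
    have hq : ∀ a, a ∈ A ↔ a / m ∈ {k | k * m ∈ A} := fun a => h.mem_iff hm m0 hmin a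
    have hone : 1 ∈ {k | k * m ∈ B} := by
      show 1 * m ∈ B
      simpa using hm
    refine ⟨fun x => f (x / m) * m + x % m, N * m, ⟨?_, ?_, ?_⟩, ?_⟩
    · intro a ha
      have h1 : f (a / m) < N := hf.mapsTo ((hq a).1 ha)
      have h2 := Nat.mod_lt a m0
      show f (a / m) * m + a % m < N * m
      have h3 : (f (a / m) + 1) * m ≤ N * m := Nat.mul_le_mul_right m h1
      rw [Nat.add_mul] at h3
      omega
    · intro a ha b hb e
      have e : f (a / m) * m + a % m = f (b / m) * m + b % m := e
      have ha2 := Nat.mod_lt a m0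
      have hb2 := Nat.mod_lt b m0
      have e1 : f (a / m) = f (b / m) := by
        have := congrArg (· / m) e
        simpa [Nat.mul_comm _ m, Nat.mul_add_div m0, Nat.div_eq_of_lt ha2, Nat.div_eq_of_lt hb2] using this
      have e2 : a % m = b % m := by rw [e1] at e; omega
      have := hf.injOn ((hq a).1 ha) ((hq b).1 hb) e1
      rw [← Nat.div_add_mod a m, ← Nat.div_add_mod b m, this, e2]
    · intro y hy
      have hy : y < N * m := hy
      have : y / m < N := by rwa [Nat.div_lt_iff_lt_mul m0]
      obtain ⟨x, hx, e⟩ := hf.surjOn this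
      have hy2 := Nat.mod_lt y m0
      have e1 : (x * m + y % m) / m = x := by
        rw [Nat.mul_comm, Nat.mul_add_div m0, Nat.div_eq_of_lt hy2]; rfl
      have e2 : (x * m + y % m) % m = y % m := by
        rw [Nat.mul_comm, Nat.mul_add_mod, Nat.mod_mod]
      refine ⟨x * m + y % m, ?_, ?_⟩
      · rw [hq, e1]; exact hx
      · show f ((x * m + y % m) / m) * m + (x * m + y % m) % m = y
        rw [e1, e2, e, Nat.div_add_mod']
    · intro a ha b hb hab
      have e := Nat.add_div (a := a) (b := b) m0
      have e' := (hq _).1 hab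
      by_cases hc : m ≤ a % m + b % m
      · rw [if_pos hc] at e
        rw [e] at e'
        exact (hQ.nocarry hone _ _ ((hq a).1 ha) ((hq b).1 hb) e').elim
      · rw [if_neg hc, Nat.add_zero] at e
        rw [e] at e'
        have := hadd _ ((hq a).1 ha) _ ((hq b).1 hb) e'
        show f ((a + b) / m) * m + (a + b) % m = (f (a / m) * m + a % m) + (f (b / m) * m + b % m)
        rw [e, this, Nat.add_mod, Nat.mod_eq_of_lt (a := a % m + b % m) (by omega)]
        ring

theorem CanT.finite (α : ℕ) (h0 : 0 < α) (C : Finset ℤ) : (CanT α C).Finite := by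
  apply Set.Finite.subset (C.powerset ×ˢ (C - C).powerset).finite_toSet
  rintro ⟨P, Q⟩ ⟨h1, h2, h3, h4, h5⟩
  simp only at h1 h2 h3 h4 h5
  have hP : P ⊆ C := by
    intro x hx
    rw [← h1]
    simpa using Finset.add_mem_add hx h4
  obtain ⟨p, hp⟩ : P.Nonempty := by rw [← Finset.card_pos]; omega
  simp only [Finset.coe_product, Set.mem_prod, Finset.mem_coe, Finset.mem_powerset]
  refine ⟨hP, fun x hx => ?_⟩
  have : p + x ∈ C := by rw [← h1]; exact Finset.add_mem_add hp hx
  simpa using Finset.sub_mem_sub this (hP hp)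

/-- If `(A,B)` is a canonical tiling of `[1,n]` with `|A| = α`, then for every tile size
`α'` the set `A` has at most as many canonical tilings as the interval `[1,α]`. -/
theorem tile_has_fewer_tilings_than_interval (n α : ℕ) (A B : Finset ℤ)
    (h : (A, B) ∈ CanT α (Finset.Icc 1 (n : ℤ))) :
    ∀ α' : ℕ, 0 < α' →
      Nat.card (CanT α' A) ≤ Nat.card (CanT α' (Finset.Icc 1 (α : ℤ))) := by
  intro α' hα'
  obtain ⟨h1, h2, h3, h4, h5⟩ := h
  simp only at h1 h2 h3 h4 h5
  have hA : ∀ a ∈ A, ∀ b ∈ B, 1 ≤ a + b ∧ a + b ≤ n := by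
    intro a ha b hb
    have := Finset.add_mem_add ha hb
    rw [h1] at this
    simpa using this
  have hA1 : ∀ a ∈ A, 1 ≤ a := fun a ha => by have := hA a ha 0 h4; omega
  have hex : ∀ x : ℤ, 1 ≤ x → x ≤ n → ∃ a ∈ A, ∃ b ∈ B, a + b = x := by
    intro x hx hx'
    rw [← Finset.mem_add, h1]; simp [hx, hx']
  rcases Nat.eq_zero_or_pos n with rfl | npos
  · have : A = ∅ := by
      rw [Finset.eq_empty_iff_forall_notMem]
      intro a ha
      have := hA a ha 0 h4
      simp at this; omega
    subst this
    simp at h2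
    subst h2
    simp
  have hinj : ∀ a ∈ A, ∀ b ∈ B, ∀ a' ∈ A, ∀ b' ∈ B, a + b = a' + b' → a = a' ∧ b = b' := by
    rw [← h1, Finset.card_add_iff] at h3
    intro a ha b hb a' ha' b' hb' e
    have := @h3 (a, b) ⟨ha, hb⟩ (a', b') ⟨ha', hb'⟩ e
    simpa using this
  have one : (1 : ℤ) ∈ A := by
    obtain ⟨a, ha, b, hb, e⟩ := hex 1 le_rfl (by omega)
    have := hA1 a ha
    have := h5 b hb
    have : a = 1 := by omega
    exact this ▸ ha
  have hT : Til n {k : ℕ | (k : ℤ) + 1 ∈ A} {k : ℕ | (k : ℤ) ∈ B} := by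
    refine ⟨by simpa using one, by simpa using h4, ?_, ?_, ?_⟩
    · intro a ha b hb
      have := hA _ ha _ hb
      omega
    · intro x hx
      obtain ⟨a, ha, b, hb, e⟩ := hex (x + 1) (by omega) (by omega)
      have := hA1 a ha
      have := h5 b hb
      refine ⟨(a - 1).toNat, ?_, b.toNat, ?_, by omega⟩
      · show (((a - 1).toNat : ℕ) : ℤ) + 1 ∈ A
        have : (((a - 1).toNat : ℕ) : ℤ) + 1 = a := by omega
        rw [this]; exact ha
      · show ((b.toNat : ℕ) : ℤ) ∈ B
        have : ((b.toNat : ℕ) : ℤ) = b := by omega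
        rw [this]; exact hb
    · intro a ha b hb a' ha' b' hb' e
      have := hinj _ ha _ hb _ ha' _ hb' (by omega)
      omega
  obtain ⟨f, N, hf, hadd⟩ := Til.main n _ _ hT
  -- transfer to integers
  obtain ⟨g, hg⟩ : ∃ g : ℤ → ℤ, g = fun x => (f x.toNat : ℤ) := ⟨_, rfl⟩
  have hmem : ∀ x : ℤ, x + 1 ∈ A → x.toNat ∈ {k : ℕ | (k : ℤ) + 1 ∈ A} := by
    intro x hx
    have := hA1 _ hx
    show ((x.toNat : ℕ) : ℤ) + 1 ∈ A
    rw [Int.toNat_of_nonneg (by omega)]; exact hx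
  have ginj : ∀ x y : ℤ, x + 1 ∈ A → y + 1 ∈ A → g x = g y → x = y := by
    intro x y hx hy e
    have e : (f x.toNat : ℤ) = f y.toNat := by simpa [hg] using e
    have := hf.injOn (hmem x hx) (hmem y hy) (by exact_mod_cast e)
    have := hA1 _ hx
    have := hA1 _ hy
    omega
  have gadd : ∀ x y : ℤ, x + 1 ∈ A → y + 1 ∈ A → x + y + 1 ∈ A → g (x + y) = g x + g y := by
    intro x y hx hy hxy
    have h6 := hA1 _ hx
    have h7 := hA1 _ hy
    have e : (x + y).toNat = x.toNat + y.toNat := by omega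
    have h8 := hmem _ hxy
    rw [e] at h8
    have := hadd _ (hmem x hx) _ (hmem y hy) h8
    simp only [hg, e, this]
    push_cast
    rfl
  have himg : A.image (fun x => g (x - 1) + 1) = Finset.Icc 1 (N : ℤ) := by
    ext y
    simp only [Finset.mem_image, Finset.mem_Icc]
    constructor
    · rintro ⟨x, hx, rfl⟩
      have : f (x - 1).toNat < N := hf.mapsTo (hmem (x - 1) (by simpa using hx))
      simp only [hg]
      omega
    · rintro ⟨hy1, hy2⟩
      have : (y - 1).toNat ∈ Set.Iio N := by
        show (y - 1).toNat < N
        omega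
      obtain ⟨x, hx, e⟩ := hf.surjOn this
      refine ⟨(x : ℤ) + 1, hx, ?_⟩
      simp only [hg, add_sub_cancel_right, Int.toNat_natCast, e]
      omega
  have Ginj : Set.InjOn (fun x => g (x - 1) + 1) (A : Set ℤ) := by
    intro x hx y hy e
    have := ginj (x - 1) (y - 1) (by simpa using hx) (by simpa using hy) (by simpa using e)
    omega
  have hN : N = α := by
    have := Finset.card_image_of_injOn Ginj
    rw [himg, h2] at this
    simpa using this
  subst hN
  have gzero : g 0 = 0 := by
    have := gadd 0 0 (by simpa using one) (by simpa using one) (by simpa using one)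
    simp at this; exact this
  have hsub : ∀ p ∈ CanT α' A, (p.1 ⊆ A) ∧ ∀ b ∈ p.2, b + 1 ∈ A := by
    rintro ⟨P, Q⟩ ⟨k1, k2, k3, k4, k5⟩
    simp only at k1 k2 k3 k4 k5 ⊢
    have hP : P ⊆ A := by
      intro x hx
      rw [← k1]
      simpa using Finset.add_mem_add hx k4
    refine ⟨hP, fun b hb => ?_⟩
    have hone := one
    rw [← k1, Finset.mem_add] at hone
    obtain ⟨a, ha, c, hc, e⟩ := hone
    have := k5 c hc
    have := hA1 a (hP ha)
    have : a = 1 := by omega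
    subst this
    rw [← k1, add_comm b]
    exact Finset.add_mem_add ha hb
  have hgi : Set.InjOn g {b | b + 1 ∈ A} := fun x hx y hy e => ginj x y hx hy e
  have hmaps : ∀ p ∈ CanT α' A,
      (p.1.image (fun x => g (x - 1) + 1), p.2.image g) ∈ CanT α' (Finset.Icc 1 (N : ℤ)) := by
    intro p hp
    obtain ⟨s1, s2⟩ := hsub p hp
    obtain ⟨P, Q⟩ := p
    obtain ⟨k1, k2, k3, k4, k5⟩ := hp
    simp only at k1 k2 k3 k4 k5 s1 s2
    have c1 : (P.image (fun x => g (x - 1) + 1)).card = P.card :=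
      Finset.card_image_of_injOn (Ginj.mono (by exact_mod_cast s1))
    have c2 : (Q.image g).card = Q.card := Finset.card_image_of_injOn (hgi.mono s2)
    have key : ∀ a ∈ P, ∀ b ∈ Q, (g (a - 1) + 1) + g b = g (a + b - 1) + 1 := by
      intro a ha b hb
      have hab : a + b ∈ A := by rw [← k1]; exact Finset.add_mem_add ha hb
      have := gadd (a - 1) b (by simpa using s1 ha) (s2 b hb)
        (by rw [show a - 1 + b + 1 = a + b by ring]; exact hab)
      rw [show a + b - 1 = a - 1 + b by ring, this]; ring
    refine ⟨?_, ?_, ?_, ?_, ?_⟩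
    · show P.image (fun x => g (x - 1) + 1) + Q.image g = _
      rw [← himg, ← k1]
      ext y
      simp only [Finset.mem_add, Finset.mem_image]
      constructor
      · rintro ⟨_, ⟨a, ha, rfl⟩, _, ⟨b, hb, rfl⟩, rfl⟩
        exact ⟨a + b, ⟨a, ha, b, hb, rfl⟩, (key a ha b hb).symm⟩
      · rintro ⟨_, ⟨a, ha, b, hb, rfl⟩, rfl⟩
        exact ⟨_, ⟨a, ha, rfl⟩, _, ⟨b, hb, rfl⟩, key a ha b hb⟩
    · exact c1.trans k2
    · show _ = (P.image (fun x => g (x - 1) + 1)).card * (Q.image g).card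
      rw [c1, c2, ← k3, h2]; simp
    · exact Finset.mem_image.2 ⟨0, k4, gzero⟩
    · intro b hb
      obtain ⟨c, _, rfl⟩ := Finset.mem_image.1 hb
      simp [hg]
  have hfin : Finite (CanT α' (Finset.Icc 1 (N : ℤ))) := (CanT.finite α' hα' _).to_subtype
  refine Nat.card_le_card_of_injective
    (fun p : CanT α' A => (⟨_, hmaps p.1 p.2⟩ : CanT α' (Finset.Icc 1 (N : ℤ)))) ?_
  rintro ⟨⟨P, Q⟩, hp⟩ ⟨⟨P', Q'⟩, hp'⟩ e
  have s := hsub _ hp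
  have s' := hsub _ hp'
  simp only [Subtype.mk.injEq, Prod.mk.injEq] at e s s' ⊢
  have aux : ∀ (F : ℤ → ℤ) (S : Set ℤ), Set.InjOn F S → ∀ X Y : Finset ℤ,
      (∀ x ∈ X, x ∈ S) → (∀ x ∈ Y, x ∈ S) → X.image F = Y.image F → X ⊆ Y := by
    intro F S hF X Y hX hY e x hx
    have : F x ∈ Y.image F := by rw [← e]; exact Finset.mem_image_of_mem _ hx
    obtain ⟨y, hy, e'⟩ := Finset.mem_image.1 this
    have := hF (hY y hy) (hX x hx) e'
    exact this ▸ hy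
  constructor
  · exact Finset.Subset.antisymm
      (aux _ _ Ginj P P' (fun x hx => s.1 hx) (fun x hx => s'.1 hx) e.1)
      (aux _ _ Ginj P' P (fun x hx => s'.1 hx) (fun x hx => s.1 hx) e.1.symm)
  · exact Finset.Subset.antisymm
      (aux _ _ hgi Q Q' s.2 s'.2 e.2)
      (aux _ _ hgi Q' Q s'.2 s.2 e.2.symm)
end
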